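/- arXiv:2005.03548 — 2 statements merged into one kernel-verified Lean document; each statement's English description precedes it below -/
import Mathlib

section
/- Let d1, d2 ≥ 1, r ∈ (1,∞), r' = r/(r−1), and let b : ℝ^{d1}×ℝ^{d2} → ℂ be continuous and locally integrable. Define ‖b‖_{BMO_{x1}(∙L^r_{x2})} = sup over cubes I1 ⊂ ℝ^{d1} of |I1|⁻¹ ∫_{I1} inf_{c∈ℂ} ‖b(x1,·) − ⟨b⟩_{I1,1}(·) − c‖_{L^r(ℝ^{d2})} dx1. There is a constant C = C(d1,d2,r) such that for every cube I1 ⊂ ℝ^{d1}, every sparse collection 𝒮2 of cubes in ℝ^{d2}, and all nonnegative numbers (λ_{S2})_{S2∈𝒮2} with Σ_{S2∈𝒮2}|S2|·λ_{S2}^{r'} ≤ 1, one has Σ_{S2∈𝒮2} λ_{S2} · osc^{1,1}(b, I1×S2) ≤ C · |I1| · ‖b‖_{BMO_{x1}(∙L^r_{x2})}. -/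
/-!
For fixed `x1` put `f = b (x1, ·) - ⟨b⟩_{I1,1}`. By Fubini `⟨b⟩_{I1 × S}` is the average of
`⟨b⟩_{I1,1}` over `S`, so the integrand of `osc^{1,1}(b, I1 × S)` is `|f - ⟨f⟩_S|`
(`cubeAvg_slice`), and `∫_S |f - ⟨f⟩_S| ≤ 2 ∫_S |f - c|` for every constant `c`
(`lintegral_sub_cubeAvg_le`). It therefore suffices to show, with `g = |f - c|`,
`∑_S λ_S ∫_S g ≤ C ‖g‖_r` (`sparse_bound`); then one takes the infimum over `c`, integrates in
`x1 ∈ I1`, and uses `J1 = I1` in the supremum.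

By Hölder's inequality for sums with weights `|S|`, and `|S| ≤ 2 |E(S)|`, that bound reduces to
`∑_S |E(S)| ⟨g⟩_S ^ r ≤ K ∫ g ^ r` (`carleson_embedding`), a linearised form of the `L^r`
boundedness of the maximal function. It follows from the truncated weak-type estimate
`t |⋃ {S : ⟨g⟩_S ≥ t}| ≤ 2 · 5^d ∫_{2g > t} g` (`weak_type`, by the Vitali covering lemma for
cubes) upon integrating in `t` against `r t ^ (r - 2)`. The number of cubes is kept finite
throughout, the sum over `𝒮` being the supremum of its finite partial sums.
-/

open MeasureTheory ENNReal Set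

noncomputable section

/-- `Euc d` is the Euclidean space `ℝ^d`. -/
abbrev Euc (d : ℕ) := EuclideanSpace ℝ (Fin d)

/-- An axis-parallel cube in `ℝ^d`, described by its center and positive side length. -/
structure Cube (d : ℕ) where
  center : Euc d
  side : ℝ
  side_pos : 0 < side

/-- The set of points of a cube. -/
def Cube.carrier {d : ℕ} (I : Cube d) : Set (Euc d) :=
  {x | ∀ i, |x i - I.center i| ≤ I.side / 2}

/-- The average `⟨b⟩_I` of a function over a cube. -/
def cubeAvg {d : ℕ} (b : Euc d → ℂ) (I : Cube d) : ℂ :=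
  (volume I.carrier).toReal⁻¹ • ∫ x in I.carrier, b x

/-- The homogeneous Hölder seminorm `‖b‖_{Ċ^{0,α}}`, valued in `[0,∞]`. -/
def holderSeminorm {d : ℕ} (α : ℝ) (b : Euc d → ℂ) : ℝ≥0∞ :=
  ⨆ (x : Euc d) (y : Euc d) (_ : x ≠ y), ENNReal.ofReal (‖b x - b y‖ / dist x y ^ α)
/-- The norm `‖b‖_{∙L^r}` = infimum over constants `c` of the `L^r` norm of `b - c`. -/
def dotLrNorm {d : ℕ} (r : ℝ) (b : Euc d → ℂ) : ℝ≥0∞ :=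
  ⨅ c : ℂ, eLpNorm (fun x => b x - c) (ENNReal.ofReal r) volume

/-- The BMO norm of `b`, valued in `[0,∞]`. -/
def bmoNorm {d : ℕ} (b : Euc d → ℂ) : ℝ≥0∞ :=
  ⨆ I : Cube d, ENNReal.ofReal ((volume I.carrier).toReal⁻¹ * ∫ x in I.carrier, ‖b x - cubeAvg b I‖)

/-- The sharp maximal function `M♯b`. -/
def sharpMaximal {d : ℕ} (b : Euc d → ℂ) (x : Euc d) : ℝ≥0∞ :=
  ⨆ (I : Cube d) (_ : x ∈ I.carrier),
    ENNReal.ofReal ((volume I.carrier).toReal⁻¹ * ∫ y in I.carrier, ‖b y - cubeAvg b I‖)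

/-- A (countable) collection of cubes is sparse if each cube `Q` carries a measurable subset
`E Q` of at least half its measure, these subsets being pairwise disjoint. -/
def IsSparse {d : ℕ} (𝒮 : Set (Cube d)) : Prop :=
  𝒮.Countable ∧ ∃ E : Cube d → Set (Euc d),
    (∀ Q ∈ 𝒮, MeasurableSet (E Q) ∧ E Q ⊆ Q.carrier ∧ volume Q.carrier ≤ 2 * volume (E Q)) ∧
    𝒮.PairwiseDisjoint E

/-- Average of `b (·, x2)` over a cube in the first factor. -/
def avgFst {d1 d2 : ℕ} (b : Euc d1 × Euc d2 → ℂ) (I1 : Cube d1) (x2 : Euc d2) : ℂ :=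
  (volume I1.carrier).toReal⁻¹ • ∫ y1 in I1.carrier, b (y1, x2)

/-- Average of `b (x1, ·)` over a cube in the second factor. -/
def avgSnd {d1 d2 : ℕ} (b : Euc d1 × Euc d2 → ℂ) (I2 : Cube d2) (x1 : Euc d1) : ℂ :=
  (volume I2.carrier).toReal⁻¹ • ∫ y2 in I2.carrier, b (x1, y2)

/-- Average of `b` over the rectangle `I1 × I2`. -/
def avgRect {d1 d2 : ℕ} (b : Euc d1 × Euc d2 → ℂ) (I1 : Cube d1) (I2 : Cube d2) : ℂ :=
  (volume (I1.carrier ×ˢ I2.carrier)).toReal⁻¹ • ∫ x in I1.carrier ×ˢ I2.carrier, b x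

/-- The bi-parameter oscillation `osc^{1,1}(b, I1 × I2)`. -/
def osc11 {d1 d2 : ℕ} (b : Euc d1 × Euc d2 → ℂ) (I1 : Cube d1) (I2 : Cube d2) : ℝ :=
  ∫ x in I1.carrier ×ˢ I2.carrier,
    ‖b x - avgFst b I1 x.2 - avgSnd b I2 x.1 + avgRect b I1 I2‖

/-- The `L^p` "norm" (with exponent `p ∈ [1,∞]`) of an `ℝ≥0∞`-valued function. -/
def lpNormENN {α : Type*} [MeasurableSpace α] (μ : Measure α) (p : ℝ≥0∞) (g : α → ℝ≥0∞) : ℝ≥0∞ :=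
  if p = ∞ then essSup g μ else (∫⁻ x, g x ^ p.toReal ∂μ) ^ (1 / p.toReal)

/-- The mixed norm `‖F‖_{L^{v1}_{x1} L^{v2}_{x2}}`. -/
def mixedNorm {d1 d2 : ℕ} {E : Type*} [NormedAddCommGroup E] (v1 v2 : ℝ≥0∞)
    (F : Euc d1 × Euc d2 → E) : ℝ≥0∞ :=
  lpNormENN volume v1 (fun x1 => lpNormENN volume v2 (fun x2 => (‖F (x1, x2)‖₊ : ℝ≥0∞)))

/-- The oscillation `osc^{v1,v2}(b, I1 × I2)` with general mixed exponents. -/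
def oscMixed {d1 d2 : ℕ} (v1 v2 : ℝ≥0∞) (b : Euc d1 × Euc d2 → ℂ)
    (I1 : Cube d1) (I2 : Cube d2) : ℝ≥0∞ :=
  mixedNorm v1 v2 ((I1.carrier ×ˢ I2.carrier).indicator
    (fun x => b x - avgFst b I1 x.2 - avgSnd b I2 x.1 + avgRect b I1 I2))

/-- A standard Calderón–Zygmund kernel on `ℝ^n` with exponent `α` and constant `CK`. -/
def IsCZKernel (n : ℕ) (α CK : ℝ) (K : Euc n → Euc n → ℂ) : Prop :=
  (∀ x y : Euc n, x ≠ y → ‖K x y‖ ≤ CK / dist x y ^ (n : ℝ)) ∧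
  (∀ x x' y : Euc n, x ≠ y → dist x x' ≤ dist x y / 2 →
    ‖K x y - K x' y‖ + ‖K y x - K y x'‖ ≤ CK * dist x x' ^ α / dist x y ^ ((n : ℝ) + α))

/-- Symmetric non-degeneracy of a kernel with constant `c₀`. -/
def SymNonDeg (n : ℕ) (c₀ : ℝ) (K : Euc n → Euc n → ℂ) : Prop :=
  ∀ (y : Euc n) (r : ℝ), 0 < r → ∃ x : Euc n, r ≤ dist x y ∧
    1 / (c₀ * r ^ (n : ℝ)) ≤ ‖K x y‖ ∧ 1 / (c₀ * r ^ (n : ℝ)) ≤ ‖K y x‖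

/-- Distance between two sets in a metric space. -/
def setDist {α : Type*} [PseudoMetricSpace α] (s t : Set α) : ℝ :=
  sInf (Set.image2 dist s t)

/-- An admissible configuration: the rectangles `J1 × J2` and `L1 × L2` have matching side
lengths in each parameter, and separation comparable to the common side length, with
comparability constants `c1 ≤ c2`. -/
def IsAdmissible {d1 d2 : ℕ} (c1 c2 : ℝ) (J1 L1 : Cube d1) (J2 L2 : Cube d2) : Prop :=
  J1.side = L1.side ∧ J2.side = L2.side ∧
  c1 * J1.side ≤ setDist J1.carrier L1.carrier ∧ setDist J1.carrier L1.carrier ≤ c2 * J1.side ∧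
  c1 * J2.side ≤ setDist J2.carrier L2.carrier ∧ setDist J2.carrier L2.carrier ≤ c2 * J2.side

/-- The difference `B(x,y) = b(x1,x2) − b(x1,y2) − b(y1,x2) + b(y1,y2)`. -/
def biB {d1 d2 : ℕ} (b : Euc d1 × Euc d2 → ℂ) (x y : Euc d1 × Euc d2) : ℂ :=
  b (x.1, x.2) - b (x.1, y.2) - b (y.1, x.2) + b (y.1, y.2)

/-- The bilinear form `Λ(f1, f2) = ∬ B(x,y) K1(x1,y1) K2(x2,y2) f1(y) f2(x) dy dx`. -/
def biCommForm {d1 d2 : ℕ} (b : Euc d1 × Euc d2 → ℂ) (K1 : Euc d1 → Euc d1 → ℂ)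
    (K2 : Euc d2 → Euc d2 → ℂ) (f1 f2 : Euc d1 × Euc d2 → ℂ) : ℂ :=
  ∫ x : Euc d1 × Euc d2, ∫ y : Euc d1 × Euc d2,
    biB b x y * K1 x.1 y.1 * K2 x.2 y.2 * f1 y * f2 x

/-! ### Cubes -/

lemma Cube.carrier_eq {d : ℕ} (I : Cube d) :
    I.carrier = (fun x : Euc d => (x.ofLp : Fin d → ℝ)) ⁻¹'
      Icc (fun i => I.center i - I.side / 2) (fun i => I.center i + I.side / 2) := by
  ext x
  simp only [Cube.carrier, mem_ofPred_eq, mem_preimage, mem_Icc, Pi.le_def, abs_le]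
  constructor
  · intro h
    exact ⟨fun i => by linarith [(h i).1], fun i => by linarith [(h i).2]⟩
  · rintro ⟨h1, h2⟩ i
    exact ⟨by linarith [h1 i], by linarith [h2 i]⟩

lemma Cube.isCompact {d : ℕ} (I : Cube d) : IsCompact I.carrier := by
  rw [Cube.carrier_eq]
  exact ((EuclideanSpace.equiv (Fin d) ℝ).toHomeomorph.isCompact_preimage).2 isCompact_Icc

lemma Cube.measurableSet {d : ℕ} (I : Cube d) : MeasurableSet I.carrier :=
  I.isCompact.isClosed.measurableSet

lemma Cube.volume_eq {d : ℕ} (I : Cube d) :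
    volume I.carrier = ENNReal.ofReal I.side ^ d := by
  rw [Cube.carrier_eq,
    (PiLp.volume_preserving_ofLp (Fin d)).measure_preimage measurableSet_Icc.nullMeasurableSet,
    Real.volume_Icc_pi]
  have : ∀ i : Fin d, I.center i + I.side / 2 - (I.center i - I.side / 2) = I.side :=
    fun i => by ring
  simp [this]

lemma Cube.volume_ne_zero {d : ℕ} (I : Cube d) : volume I.carrier ≠ 0 := by
  rw [I.volume_eq]
  exact pow_ne_zero _ (by simpa using I.side_pos)

lemma Cube.volume_ne_top {d : ℕ} (I : Cube d) : volume I.carrier ≠ ∞ := by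
  rw [I.volume_eq]
  exact ENNReal.pow_ne_top ENNReal.ofReal_ne_top

lemma Cube.nonempty {d : ℕ} (I : Cube d) : I.carrier.Nonempty :=
  ⟨I.center, fun i => by simpa using (half_pos I.side_pos).le⟩

/-- The concentric dilate `5I`. -/
def Cube.five {d : ℕ} (I : Cube d) : Cube d := ⟨I.center, 5 * I.side, by linarith [I.side_pos]⟩

lemma Cube.volume_five {d : ℕ} (I : Cube d) :
    volume I.five.carrier = 5 ^ d * volume I.carrier := by
  rw [Cube.volume_eq, Cube.volume_eq]
  simp only [Cube.five]
  rw [ENNReal.ofReal_mul (by norm_num), mul_pow]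
  norm_num

lemma Cube.subset_five {d : ℕ} {I J : Cube d} (h : (I.carrier ∩ J.carrier).Nonempty)
    (hs : I.side ≤ 2 * J.side) : I.carrier ⊆ J.five.carrier := by
  obtain ⟨z, hzI, hzJ⟩ := h
  intro x hx i
  have h1 := abs_le.1 (hx i)
  have h2 := abs_le.1 (hzI i)
  have h3 := abs_le.1 (hzJ i)
  simp only [Cube.five]
  rw [abs_le]
  constructor <;> linarith [h1.1, h1.2, h2.1, h2.2, h3.1, h3.2]

/-! ### The maximal estimate -/

/-- Weak-type bound for the uncentred cubic maximal operator with truncation: on cubes where the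
average of `g` is at least `t`, the part of `g` above `t / 2` already carries half of the integral. -/
lemma weak_type {d : ℕ} (g : Euc d → ℝ) (hg : Measurable g) (T : Finset (Cube d)) (t : ℝ)
    (ht : 0 < t)
    (hT : ∀ Q ∈ T, ENNReal.ofReal t * volume Q.carrier ≤ ∫⁻ x in Q.carrier, ENNReal.ofReal (g x)) :
    ENNReal.ofReal t * volume (⋃ Q ∈ T, Q.carrier) ≤
      2 * 5 ^ d * ∫⁻ x, {x | t < 2 * g x}.indicator (fun x => ENNReal.ofReal (g x)) x := by
  classical
  set G : Euc d → ℝ≥0∞ := {x | t < 2 * g x}.indicator (fun x => ENNReal.ofReal (g x)) with hG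
  have hGm : Measurable G :=
    hg.ennreal_ofReal.indicator (measurableSet_lt measurable_const (hg.const_mul 2))
  have key : ∀ Q ∈ T, ENNReal.ofReal t * volume Q.carrier ≤ 2 * ∫⁻ x in Q.carrier, G x := by
    intro Q hQ
    have h1 : ∫⁻ x in Q.carrier, ENNReal.ofReal (g x) ≤
        (∫⁻ x in Q.carrier, G x) + ENNReal.ofReal (t / 2) * volume Q.carrier := by
      calc ∫⁻ x in Q.carrier, ENNReal.ofReal (g x)
          ≤ ∫⁻ x in Q.carrier, (G x + ENNReal.ofReal (t / 2)) := by
            refine lintegral_mono fun x => ?_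
            by_cases hx : t < 2 * g x
            · simp [hG, hx]
            · exact le_add_left (ENNReal.ofReal_le_ofReal (by linarith))
        _ = _ := by
            rw [lintegral_add_left hGm]
            simp
    have h2 : ENNReal.ofReal t = ENNReal.ofReal (t / 2) + ENNReal.ofReal (t / 2) := by
      rw [← ENNReal.ofReal_add (by positivity) (by positivity)]; simp
    have hfin : ENNReal.ofReal (t / 2) * volume Q.carrier ≠ ∞ :=
      ENNReal.mul_ne_top ENNReal.ofReal_ne_top Q.volume_ne_top
    have h3 := (hT Q hQ).trans h1
    rw [h2, add_mul] at h3 ⊢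
    have h4 := (ENNReal.add_le_add_iff_right hfin).1 h3
    rw [two_mul]
    exact add_le_add h4 h4
  obtain ⟨u, huT, hud, hu⟩ := Vitali.exists_disjoint_subfamily_covering_enlargement
    (fun Q : Cube d => Q.carrier) (T : Set (Cube d)) (fun Q => Q.side) 2 (by norm_num)
    (fun Q _ => Q.side_pos.le) (∑ Q ∈ T, Q.side)
    (fun Q hQ => Finset.single_le_sum (f := fun Q : Cube d => Q.side)
      (fun Q _ => Q.side_pos.le) hQ)
    (fun Q _ => Q.nonempty)
  obtain ⟨U, rfl⟩ := (T.finite_toSet.subset huT).exists_finset_coe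
  have hcov : (⋃ Q ∈ T, Q.carrier) ⊆ ⋃ Q ∈ U, Q.five.carrier := by
    intro x hx
    simp only [mem_iUnion] at hx ⊢
    obtain ⟨Q, hQ, hxQ⟩ := hx
    obtain ⟨J, hJ, hne, hs⟩ := hu Q hQ
    exact ⟨J, hJ, Cube.subset_five hne hs hxQ⟩
  calc ENNReal.ofReal t * volume (⋃ Q ∈ T, Q.carrier)
      ≤ ENNReal.ofReal t * ∑ Q ∈ U, 5 ^ d * volume Q.carrier := by
        gcongr
        refine (measure_mono hcov).trans ((measure_biUnion_finset_le _ _).trans ?_)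
        simp [Cube.volume_five]
    _ = 5 ^ d * ∑ Q ∈ U, ENNReal.ofReal t * volume Q.carrier := by
        rw [Finset.mul_sum, Finset.mul_sum]
        exact Finset.sum_congr rfl fun _ _ => by ring
    _ ≤ 5 ^ d * ∑ Q ∈ U, 2 * ∫⁻ x in Q.carrier, G x := by
        exact mul_le_mul_right (Finset.sum_le_sum fun Q hQ => key Q (huT hQ)) _
    _ = 2 * 5 ^ d * ∫⁻ x in ⋃ Q ∈ U, Q.carrier, G x := by
        rw [lintegral_biUnion_finset hud (fun Q _ => Q.measurableSet), ← Finset.mul_sum]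
        ring
    _ ≤ _ := by
        gcongr
        exact Measure.restrict_le_self

lemma lintegral_rpow_layer (p : ℝ) (hp : 0 < p) (a : ℝ) (ha : 0 ≤ a) :
    ∫⁻ t in Ioi (0 : ℝ), (if t < a then ENNReal.ofReal (t ^ (p - 1)) else 0) =
      ENNReal.ofReal (a ^ p / p) := by
  have h0 : (fun t : ℝ => if t < a then ENNReal.ofReal (t ^ (p - 1)) else 0) =
      (Iio a).indicator (fun t => ENNReal.ofReal (t ^ (p - 1))) := by
    ext t; simp [indicator]
  have hI : IntegrableOn (fun t : ℝ => t ^ (p - 1)) (Ioc 0 a) volume :=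
    (intervalIntegrable_iff_integrableOn_Ioc_of_le ha).1
      (intervalIntegral.intervalIntegrable_rpow' (by linarith))
  rw [h0, lintegral_indicator measurableSet_Iio, Measure.restrict_restrict measurableSet_Iio,
    inter_comm, Ioi_inter_Iio, ← Measure.restrict_congr_set Ioo_ae_eq_Ioc.symm,
    ← ofReal_integral_eq_lintegral_ofReal hI, ← intervalIntegral.integral_of_le ha,
    integral_rpow (Or.inl (by linarith))]
  · congr 1
    rw [sub_add_cancel, Real.zero_rpow hp.ne', sub_zero]
  · filter_upwards [ae_restrict_mem measurableSet_Ioc] with t ht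
    exact Real.rpow_nonneg ht.1.le _

/-- The constant of the embedding `carleson_embedding`. -/
def embConst (d : ℕ) (r : ℝ) : ℝ := r * (2 * 5 ^ d) * (2 ^ (r - 1) / (r - 1))

/-- Embedding along disjoint sets `E Q ⊆ Q`, the linearised form of the strong-type bound for the
maximal operator: integrate the weak-type bound in `t` against `r t ^ (r - 1)`. -/
lemma carleson_embedding {d : ℕ} (r : ℝ) (hr : 1 < r) (g : Euc d → ℝ) (hg : Measurable g)
    (hg0 : ∀ x, 0 ≤ g x) (T : Finset (Cube d)) (E : Cube d → Set (Euc d))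
    (hE : ∀ Q ∈ T, MeasurableSet (E Q) ∧ E Q ⊆ Q.carrier)
    (hd : (T : Set (Cube d)).PairwiseDisjoint E)
    (hfin : ∀ Q ∈ T, ∫⁻ x in Q.carrier, ENNReal.ofReal (g x) ≠ ∞) :
    ∑ Q ∈ T, volume (E Q) *
      ((volume Q.carrier)⁻¹ * ∫⁻ x in Q.carrier, ENNReal.ofReal (g x)) ^ r ≤
      ENNReal.ofReal (embConst d r) * ∫⁻ x, ENNReal.ofReal (g x) ^ r := by
  classical
  have hr0 : 0 < r := by linarith
  have hr1 : 0 < r - 1 := by linarith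
  set a : Cube d → ℝ :=
    fun Q => ((volume Q.carrier)⁻¹ * ∫⁻ x in Q.carrier, ENNReal.ofReal (g x)).toReal with ha
  have ha0 : ∀ Q, 0 ≤ a Q := fun Q => ENNReal.toReal_nonneg
  have haQ : ∀ Q ∈ T, (volume Q.carrier)⁻¹ * ∫⁻ x in Q.carrier, ENNReal.ofReal (g x) =
      ENNReal.ofReal (a Q) := fun Q hQ => (ENNReal.ofReal_toReal
        (ENNReal.mul_ne_top (ENNReal.inv_ne_top.2 Q.volume_ne_zero) (hfin Q hQ))).symm
  have hpow : ∀ Q, ENNReal.ofReal (a Q) ^ r = ENNReal.ofReal r *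
      ∫⁻ t in Ioi (0 : ℝ), (if t < a Q then ENNReal.ofReal (t ^ (r - 1)) else 0) := by
    intro Q
    rw [lintegral_rpow_layer r hr0 _ (ha0 Q), ENNReal.ofReal_rpow_of_nonneg (ha0 Q) hr0.le,
      ← ENNReal.ofReal_mul hr0.le]
    congr 1
    field_simp
  have hmeas1 : ∀ c : ℝ, Measurable
      (fun t : ℝ => if t < c then ENNReal.ofReal (t ^ (r - 1)) else 0) := fun c =>
    Measurable.ite measurableSet_Iio (by fun_prop) measurable_const
  -- Disjointness of the `E Q` bounds the level sum at height `t` by the measure of a union of cubes,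
  -- to which the weak-type bound applies.
  have hlevel : ∀ t ∈ Ioi (0 : ℝ),
      ∑ Q ∈ T, volume (E Q) * (if t < a Q then ENNReal.ofReal (t ^ (r - 1)) else 0) ≤
      2 * 5 ^ d * ∫⁻ x, (if t < 2 * g x then ENNReal.ofReal (t ^ (r - 1 - 1)) else 0) *
        ENNReal.ofReal (g x) := by
    intro t ht
    have ht : 0 < t := ht
    set T' := T.filter (fun Q => t < a Q) with hT'
    have hsub : ∀ Q ∈ T', Q ∈ T := fun Q hQ => (Finset.mem_filter.1 hQ).1
    have hw := weak_type g hg T' t ht (by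
      intro Q hQ
      have h1 := (Finset.mem_filter.1 hQ).2.le
      have h2 : ENNReal.ofReal t ≤ (volume Q.carrier)⁻¹ *
          ∫⁻ x in Q.carrier, ENNReal.ofReal (g x) := by
        rw [haQ Q (hsub Q hQ)]
        exact ENNReal.ofReal_le_ofReal h1
      calc ENNReal.ofReal t * volume Q.carrier
          ≤ ((volume Q.carrier)⁻¹ * ∫⁻ x in Q.carrier, ENNReal.ofReal (g x)) *
            volume Q.carrier := by gcongr
        _ = (∫⁻ x in Q.carrier, ENNReal.ofReal (g x)) *
            ((volume Q.carrier)⁻¹ * volume Q.carrier) := by ring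
        _ = _ := by rw [ENNReal.inv_mul_cancel Q.volume_ne_zero Q.volume_ne_top, mul_one])
    have hsum : ∑ Q ∈ T', volume (E Q) ≤ volume (⋃ Q ∈ T', Q.carrier) := by
      rw [← measure_biUnion_finset (hd.subset (by intro Q hQ; exact hsub Q hQ))
        (fun Q hQ => (hE Q (hsub Q hQ)).1)]
      exact measure_mono (iUnion₂_mono fun Q hQ => (hE Q (hsub Q hQ)).2)
    have hsplit : ENNReal.ofReal (t ^ (r - 1)) =
        ENNReal.ofReal (t ^ (r - 1 - 1)) * ENNReal.ofReal t := by
      rw [← ENNReal.ofReal_mul (by positivity)]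
      congr 1
      rw [← Real.rpow_add_one ht.ne', sub_add_cancel]
    calc ∑ Q ∈ T, volume (E Q) * (if t < a Q then ENNReal.ofReal (t ^ (r - 1)) else 0)
        = ENNReal.ofReal (t ^ (r - 1 - 1)) * (ENNReal.ofReal t * ∑ Q ∈ T', volume (E Q)) := by
          simp only [mul_ite, mul_zero]
          rw [← Finset.sum_filter, ← Finset.sum_mul, hsplit]
          ring
      _ ≤ ENNReal.ofReal (t ^ (r - 1 - 1)) * (2 * 5 ^ d *
          ∫⁻ x, {x | t < 2 * g x}.indicator (fun x => ENNReal.ofReal (g x)) x) := by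
          exact mul_le_mul_right ((mul_le_mul_right hsum _).trans hw) _
      _ = _ := by
          rw [mul_left_comm, ← lintegral_const_mul' _ _ ENNReal.ofReal_ne_top]
          congr 1
          refine lintegral_congr fun x => ?_
          by_cases hx : t < 2 * g x <;> simp [indicator, hx]
  have hmeas2 : Measurable (fun z : ℝ × Euc d =>
      (if z.1 < 2 * g z.2 then ENNReal.ofReal (z.1 ^ (r - 1 - 1)) else 0) *
        ENNReal.ofReal (g z.2)) := by
    refine Measurable.mul (Measurable.ite (measurableSet_lt measurable_fst ?_) ?_
      measurable_const) ?_ <;> fun_prop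
  calc ∑ Q ∈ T, volume (E Q) *
      ((volume Q.carrier)⁻¹ * ∫⁻ x in Q.carrier, ENNReal.ofReal (g x)) ^ r
      = ENNReal.ofReal r * ∫⁻ t in Ioi (0 : ℝ), ∑ Q ∈ T, volume (E Q) *
          (if t < a Q then ENNReal.ofReal (t ^ (r - 1)) else 0) := by
        rw [lintegral_finsetSum _ (fun Q _ => (hmeas1 (a Q)).const_mul _), Finset.mul_sum]
        refine Finset.sum_congr rfl fun Q hQ => ?_
        rw [haQ Q hQ, hpow, lintegral_const_mul _ (hmeas1 _)]
        ring
    _ ≤ ENNReal.ofReal r * ∫⁻ t in Ioi (0 : ℝ), 2 * 5 ^ d * ∫⁻ x,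
          (if t < 2 * g x then ENNReal.ofReal (t ^ (r - 1 - 1)) else 0) *
            ENNReal.ofReal (g x) := by
        exact mul_le_mul_right (setLIntegral_mono' measurableSet_Ioi hlevel) _
    _ = ENNReal.ofReal r * (2 * 5 ^ d * ∫⁻ x, (∫⁻ t in Ioi (0 : ℝ),
          (if t < 2 * g x then ENNReal.ofReal (t ^ (r - 1 - 1)) else 0)) *
            ENNReal.ofReal (g x)) := by
        rw [lintegral_const_mul' _ _ (by finiteness), lintegral_lintegral_swap hmeas2.aemeasurable]
        congr 2
        refine lintegral_congr fun x => ?_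
        rw [lintegral_mul_const' _ _ ENNReal.ofReal_ne_top]
    _ = ENNReal.ofReal r * (2 * 5 ^ d * ∫⁻ x, ENNReal.ofReal (2 ^ (r - 1) / (r - 1)) *
            ENNReal.ofReal (g x) ^ r) := by
        congr 2
        refine lintegral_congr fun x => ?_
        rw [lintegral_rpow_layer _ hr1 _ (by linarith [hg0 x]),
          ENNReal.ofReal_rpow_of_nonneg (hg0 x) hr0.le,
          ← ENNReal.ofReal_mul (div_nonneg (Real.rpow_nonneg (by linarith [hg0 x]) _) hr1.le),
          ← ENNReal.ofReal_mul (by positivity)]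
        congr 1
        have : g x ^ r = g x ^ (r - 1) * g x := by
          rw [← Real.rpow_add_one' (hg0 x) (by linarith), sub_add_cancel]
        rw [this, Real.mul_rpow (by norm_num) (hg0 x)]
        ring
    _ = _ := by
        have h5 : (2 * 5 ^ d : ℝ≥0∞) = ENNReal.ofReal (2 * 5 ^ d) := by
          rw [ENNReal.ofReal_mul (by norm_num), ENNReal.ofReal_pow (by norm_num)]
          norm_num
        rw [lintegral_const_mul' _ _ ENNReal.ofReal_ne_top, embConst, h5,
          ENNReal.ofReal_mul (p := r * (2 * 5 ^ d)) (by positivity), ENNReal.ofReal_mul hr0.le]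
        ring

lemma embConst_pos (d : ℕ) (r : ℝ) (hr : 1 < r) : 0 < embConst d r := by
  have : 0 < r - 1 := by linarith
  unfold embConst
  positivity

/-- Duality between `ℓ^{r'}`-normalised coefficients and `L^r`, for a finite sparse family. -/
lemma sparse_bound {d : ℕ} (r r' : ℝ) (hr : 1 < r) (hr' : 1 / r + 1 / r' = 1) (g : Euc d → ℝ)
    (hg : Measurable g) (hg0 : ∀ x, 0 ≤ g x) (T : Finset (Cube d)) (E : Cube d → Set (Euc d))
    (hE : ∀ Q ∈ T, MeasurableSet (E Q) ∧ E Q ⊆ Q.carrier ∧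
      volume Q.carrier ≤ 2 * volume (E Q))
    (hd : (T : Set (Cube d)).PairwiseDisjoint E)
    (hfin : ∀ Q ∈ T, ∫⁻ x in Q.carrier, ENNReal.ofReal (g x) ≠ ∞)
    (lam : Cube d → ℝ) (hlam : ∀ Q, 0 ≤ lam Q)
    (hsum : ∑ Q ∈ T, ENNReal.ofReal ((volume Q.carrier).toReal * lam Q ^ r') ≤ 1) :
    ∑ Q ∈ T, ENNReal.ofReal (lam Q) * ∫⁻ x in Q.carrier, ENNReal.ofReal (g x) ≤
      ENNReal.ofReal ((2 * embConst d r) ^ (1 / r)) *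
        (∫⁻ x, ENNReal.ofReal (g x) ^ r) ^ (1 / r) := by
  have hr0 : 0 < r := by linarith
  have hK := embConst_pos d r hr
  have hconj : r.HolderConjugate r' :=
    Real.holderConjugate_iff.2 ⟨hr, by simpa only [one_div] using hr'⟩
  have hr'0 : 0 < r' := hconj.symm.pos
  set A : Cube d → ℝ≥0∞ :=
    fun Q => (volume Q.carrier)⁻¹ * ∫⁻ x in Q.carrier, ENNReal.ofReal (g x) with hA
  have hone : 1 / r' + 1 / r = 1 := by rw [add_comm]; exact hr'
  have hterm : ∀ Q, ENNReal.ofReal (lam Q) * ∫⁻ x in Q.carrier, ENNReal.ofReal (g x) =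
      (ENNReal.ofReal (lam Q) * volume Q.carrier ^ (1 / r')) *
        (volume Q.carrier ^ (1 / r) * A Q) := by
    intro Q
    calc ENNReal.ofReal (lam Q) * ∫⁻ x in Q.carrier, ENNReal.ofReal (g x)
        = ENNReal.ofReal (lam Q) * (volume Q.carrier * A Q) := by
          rw [hA]
          simp only
          rw [← mul_assoc (volume Q.carrier),
            ENNReal.mul_inv_cancel Q.volume_ne_zero Q.volume_ne_top, one_mul]
      _ = ENNReal.ofReal (lam Q) *
          (volume Q.carrier ^ (1 / r') * volume Q.carrier ^ (1 / r) * A Q) := by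
          rw [← ENNReal.rpow_add _ _ Q.volume_ne_zero Q.volume_ne_top, hone, ENNReal.rpow_one]
      _ = _ := by ring
  have h1 : ∑ Q ∈ T, (ENNReal.ofReal (lam Q) * volume Q.carrier ^ (1 / r')) ^ r' ≤ 1 := by
    refine le_trans (le_of_eq (Finset.sum_congr rfl fun Q _ => ?_)) hsum
    rw [ENNReal.mul_rpow_of_nonneg _ _ hr'0.le, ← ENNReal.rpow_mul, one_div_mul_cancel hr'0.ne',
      ENNReal.rpow_one, ENNReal.ofReal_mul ENNReal.toReal_nonneg,
      ENNReal.ofReal_toReal Q.volume_ne_top, ENNReal.ofReal_rpow_of_nonneg (hlam Q) hr'0.le,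
      mul_comm]
  have h2 : ∑ Q ∈ T, (volume Q.carrier ^ (1 / r) * A Q) ^ r ≤
      ENNReal.ofReal (2 * embConst d r) * ∫⁻ x, ENNReal.ofReal (g x) ^ r := by
    calc ∑ Q ∈ T, (volume Q.carrier ^ (1 / r) * A Q) ^ r
        = ∑ Q ∈ T, volume Q.carrier * A Q ^ r := by
          refine Finset.sum_congr rfl fun Q _ => ?_
          rw [ENNReal.mul_rpow_of_nonneg _ _ hr0.le, ← ENNReal.rpow_mul,
            one_div_mul_cancel hr0.ne', ENNReal.rpow_one]
      _ ≤ ∑ Q ∈ T, 2 * (volume (E Q) * A Q ^ r) := by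
          refine Finset.sum_le_sum fun Q hQ => ?_
          rw [← mul_assoc]
          exact mul_le_mul_left (hE Q hQ).2.2 _
      _ ≤ 2 * (ENNReal.ofReal (embConst d r) * ∫⁻ x, ENNReal.ofReal (g x) ^ r) := by
          rw [← Finset.mul_sum]
          exact mul_le_mul_right (carleson_embedding r hr g hg hg0 T E
            (fun Q hQ => ⟨(hE Q hQ).1, (hE Q hQ).2.1⟩) hd hfin) _
      _ = _ := by
          rw [ENNReal.ofReal_mul (by norm_num), mul_assoc]
          norm_num
  calc ∑ Q ∈ T, ENNReal.ofReal (lam Q) * ∫⁻ x in Q.carrier, ENNReal.ofReal (g x)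
      = ∑ Q ∈ T, (ENNReal.ofReal (lam Q) * volume Q.carrier ^ (1 / r')) *
        (volume Q.carrier ^ (1 / r) * A Q) := Finset.sum_congr rfl fun Q _ => hterm Q
    _ ≤ _ := ENNReal.inner_le_Lp_mul_Lq T _ _ hconj.symm
    _ ≤ 1 ^ (1 / r') * (ENNReal.ofReal (2 * embConst d r) *
          ∫⁻ x, ENNReal.ofReal (g x) ^ r) ^ (1 / r) :=
        mul_le_mul' (ENNReal.rpow_le_rpow h1 (by positivity))
          (ENNReal.rpow_le_rpow h2 (by positivity))
    _ = _ := by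
        rw [ENNReal.one_rpow, one_mul, ENNReal.mul_rpow_of_nonneg _ _ (by positivity),
          ENNReal.ofReal_rpow_of_nonneg (by positivity) (by positivity)]

/-! ### Oscillations -/

/-- The mean oscillation is, up to a factor `2`, the best approximation by constants. -/
lemma lintegral_sub_cubeAvg_le {d : ℕ} (f : Euc d → ℂ) (Q : Cube d)
    (hf : IntegrableOn f Q.carrier) (c : ℂ) :
    ∫⁻ x in Q.carrier, ‖f x - cubeAvg f Q‖ₑ ≤ 2 * ∫⁻ x in Q.carrier, ‖f x - c‖ₑ := by
  have hc : IntegrableOn (fun _ : Euc d => c) Q.carrier :=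
    integrableOn_const (hs := Q.volume_ne_top)
  have hvol : (volume Q.carrier).toReal ≠ 0 :=
    ENNReal.toReal_ne_zero.2 ⟨Q.volume_ne_zero, Q.volume_ne_top⟩
  have havg : c - cubeAvg f Q =
      -((volume Q.carrier).toReal⁻¹ • ∫ x in Q.carrier, (f x - c)) := by
    rw [integral_sub hf hc, setIntegral_const, smul_sub, smul_smul, measureReal_def,
      inv_mul_cancel₀ hvol, one_smul, cubeAvg]
    ring
  have hbound : ‖c - cubeAvg f Q‖ₑ * volume Q.carrier ≤ ∫⁻ x in Q.carrier, ‖f x - c‖ₑ := by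
    rw [havg, enorm_neg, enorm_smul]
    have h1 : ‖(volume Q.carrier).toReal⁻¹‖ₑ = (volume Q.carrier)⁻¹ := by
      rw [enorm_inv hvol, Real.enorm_of_nonneg ENNReal.toReal_nonneg,
        ENNReal.ofReal_toReal Q.volume_ne_top]
    rw [h1, mul_right_comm, ENNReal.inv_mul_cancel Q.volume_ne_zero Q.volume_ne_top, one_mul]
    exact enorm_integral_le_lintegral_enorm _
  calc ∫⁻ x in Q.carrier, ‖f x - cubeAvg f Q‖ₑ
      ≤ ∫⁻ x in Q.carrier, (‖f x - c‖ₑ + ‖c - cubeAvg f Q‖ₑ) := by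
        refine lintegral_mono fun x => ?_
        rw [← sub_add_sub_cancel (f x) c (cubeAvg f Q)]
        exact enorm_add_le _ _
    _ = (∫⁻ x in Q.carrier, ‖f x - c‖ₑ) + ‖c - cubeAvg f Q‖ₑ * volume Q.carrier := by
        rw [lintegral_add_right _ measurable_const]
        simp
    _ ≤ _ := by
        rw [two_mul]
        exact add_le_add_right hbound _

lemma measurable_avgFst {d1 d2 : ℕ} (b : Euc d1 × Euc d2 → ℂ) (hb : Continuous b) (I : Cube d1) :
    Measurable (avgFst b I) := by
  unfold avgFst
  exact ((hb.stronglyMeasurable.integral_prod_left'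
    (μ := volume.restrict I.carrier)).const_smul
      (volume I.carrier).toReal⁻¹).measurable

lemma measurable_avgSnd {d1 d2 : ℕ} (b : Euc d1 × Euc d2 → ℂ) (hb : Continuous b) (I : Cube d2) :
    Measurable (avgSnd b I) := by
  unfold avgSnd
  exact ((hb.stronglyMeasurable.integral_prod_right'
    (ν := volume.restrict I.carrier)).const_smul
      (volume I.carrier).toReal⁻¹).measurable

lemma integrable_rect {d1 d2 : ℕ} (b : Euc d1 × Euc d2 → ℂ) (hb : Continuous b) (I : Cube d1)
    (J : Cube d2) :
    Integrable b ((volume.restrict I.carrier).prod (volume.restrict J.carrier)) := by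
  rw [Measure.prod_restrict, ← Measure.volume_eq_prod]
  exact hb.continuousOn.integrableOn_compact (I.isCompact.prod J.isCompact)

lemma integrableOn_avgFst {d1 d2 : ℕ} (b : Euc d1 × Euc d2 → ℂ) (hb : Continuous b) (I : Cube d1)
    (J : Cube d2) : IntegrableOn (avgFst b I) J.carrier :=
  (integrable_rect b hb I J).integral_prod_right.smul (volume I.carrier).toReal⁻¹

lemma integrableOn_slice {d1 d2 : ℕ} (b : Euc d1 × Euc d2 → ℂ) (hb : Continuous b)
    (J : Cube d2) (x1 : Euc d1) : IntegrableOn (fun x2 => b (x1, x2)) J.carrier :=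
  (by fun_prop : Continuous fun x2 => b (x1, x2)).continuousOn.integrableOn_compact J.isCompact

/-- `⟨b⟩_{I × J}` is the average over `J` of `⟨b⟩_{I,1}`, so the bi-parameter oscillation is the
one-parameter one of `b (x1, ·) - ⟨b⟩_{I,1}`. -/
lemma cubeAvg_slice {d1 d2 : ℕ} (b : Euc d1 × Euc d2 → ℂ) (hb : Continuous b) (I : Cube d1)
    (J : Cube d2) (x1 : Euc d1) :
    cubeAvg (fun x2 => b (x1, x2) - avgFst b I x2) J = avgSnd b J x1 - avgRect b I J := by
  have hrect : avgRect b I J =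
      (volume J.carrier).toReal⁻¹ • ∫ x2 in J.carrier, avgFst b I x2 := by
    unfold avgRect avgFst
    rw [integral_smul, smul_smul, Measure.volume_eq_prod, Measure.prod_prod, ENNReal.toReal_mul,
      mul_inv, mul_comm (volume J.carrier).toReal⁻¹, ← Measure.prod_restrict,
      integral_prod_symm _ (integrable_rect b hb I J)]
  rw [cubeAvg, integral_sub (integrableOn_slice b hb J x1) (integrableOn_avgFst b hb I J),
    smul_sub, hrect, avgSnd]

theorem statement7 (d1 d2 : ℕ) (hd1 : 1 ≤ d1) (hd2 : 1 ≤ d2)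
    (r r' : ℝ) (hr : 1 < r) (hr' : 1 / r + 1 / r' = 1) :
    ∃ C : ℝ, 0 < C ∧ ∀ b : Euc d1 × Euc d2 → ℂ, Continuous b →
      MeasureTheory.LocallyIntegrable b volume →
      ∀ (I1 : Cube d1) (𝒮 : Set (Cube d2)) (lam : Cube d2 → ℝ), IsSparse 𝒮 →
        (∀ Q, 0 ≤ lam Q) →
        (∑' S : 𝒮, ENNReal.ofReal ((volume S.1.carrier).toReal * lam S.1 ^ r') ≤ 1) →
        ∑' S : 𝒮, ENNReal.ofReal (lam S.1 * osc11 b I1 S.1) ≤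
          ENNReal.ofReal C * volume I1.carrier *
            ⨆ J1 : Cube d1, (volume J1.carrier)⁻¹ *
              ∫⁻ x1 in J1.carrier, ⨅ c : ℂ,
                eLpNorm (fun x2 => b (x1, x2) - avgFst b J1 x2 - c) (ENNReal.ofReal r) volume := by
  have hr0 : 0 < r := by linarith
  have hK := embConst_pos d2 r hr
  set C₀ : ℝ := (2 * embConst d2 r) ^ (1 / r) with hC₀
  have hC₀pos : 0 < C₀ := by positivity
  refine ⟨2 * C₀, by positivity, ?_⟩
  intro b hb _ I1 𝒮 lam hS hlam hsum
  obtain ⟨-, E, hE, hdisj⟩ := hS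
  set N : Euc d1 → ℝ≥0∞ := fun x1 => ⨅ c : ℂ,
    eLpNorm (fun x2 => b (x1, x2) - avgFst b I1 x2 - c) (ENNReal.ofReal r) volume with hN
  set Φ : Cube d2 → Euc d1 × Euc d2 → ℂ := fun Q x =>
    b x - avgFst b I1 x.2 - avgSnd b Q x.1 + avgRect b I1 Q with hΦ
  have hΦm : ∀ Q, Measurable (Φ Q) := fun Q =>
    ((hb.measurable.sub ((measurable_avgFst b hb I1).comp measurable_snd)).sub
      ((measurable_avgSnd b hb Q).comp measurable_fst)).add_const _
  have hΨm : ∀ Q : Cube d2, Measurable fun x1 => ∫⁻ x2 in Q.carrier, ‖Φ Q (x1, x2)‖ₑ := fun Q =>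
    (hΦm Q).enorm.lintegral_prod_right'
  have hosc : ∀ Q : Cube d2, ENNReal.ofReal (osc11 b I1 Q) ≤
      ∫⁻ x1 in I1.carrier, ∫⁻ x2 in Q.carrier, ‖Φ Q (x1, x2)‖ₑ := by
    intro Q
    rw [← lintegral_prod _ (hΦm Q).enorm.aemeasurable, Measure.prod_restrict,
      ← Measure.volume_eq_prod]
    calc ENNReal.ofReal (osc11 b I1 Q) ≤ ‖osc11 b I1 Q‖ₑ := Real.ofReal_le_enorm _
      _ ≤ ∫⁻ x in I1.carrier ×ˢ Q.carrier, ‖‖Φ Q x‖‖ₑ := enorm_integral_le_lintegral_enorm _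
      _ = _ := by simp only [enorm_norm]
  have hswap : ∑' S : 𝒮, ENNReal.ofReal (lam S.1 * osc11 b I1 S.1) ≤
      ENNReal.ofReal (2 * C₀) * ∫⁻ x1 in I1.carrier, N x1 := by
    rw [ENNReal.tsum_eq_iSup_sum]
    refine iSup_le fun T₀ => ?_
    set T : Finset (Cube d2) := T₀.map (Function.Embedding.subtype _) with hT
    have hTS : ∀ Q ∈ T, Q ∈ 𝒮 := by
      intro Q hQ
      obtain ⟨S, -, rfl⟩ := Finset.mem_map.1 hQ
      exact S.2
    have hsumT : ∑ Q ∈ T, ENNReal.ofReal ((volume Q.carrier).toReal * lam Q ^ r') ≤ 1 := by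
      rw [hT, Finset.sum_map]
      exact (ENNReal.sum_le_tsum T₀).trans hsum
    have hpt : ∀ x1, ∑ Q ∈ T, ENNReal.ofReal (lam Q) * ∫⁻ x2 in Q.carrier, ‖Φ Q (x1, x2)‖ₑ ≤
        ENNReal.ofReal (2 * C₀) * N x1 := by
      intro x1
      rw [hN, ENNReal.mul_iInf_of_ne (by simpa using hC₀pos) ENNReal.ofReal_ne_top]
      refine le_iInf fun c => ?_
      set g : Euc d2 → ℝ := fun x2 => ‖b (x1, x2) - avgFst b I1 x2 - c‖ with hg
      have hgm : Measurable g :=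
        (((by fun_prop : Continuous fun x2 => b (x1, x2)).measurable.sub
          (measurable_avgFst b hb I1)).sub_const c).norm
      have hint : ∀ Q : Cube d2, IntegrableOn (fun x2 => b (x1, x2) - avgFst b I1 x2) Q.carrier :=
        fun Q => (integrableOn_slice b hb Q x1).sub (integrableOn_avgFst b hb I1 Q)
      have hofReal : ∀ x2, ENNReal.ofReal (g x2) = ‖b (x1, x2) - avgFst b I1 x2 - c‖ₑ :=
        fun x2 => ofReal_norm _
      have hfin : ∀ Q ∈ T, ∫⁻ x2 in Q.carrier, ENNReal.ofReal (g x2) ≠ ∞ := by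
        intro Q _
        simp only [hofReal]
        exact ((hint Q).sub (integrableOn_const (hs := Q.volume_ne_top))).2.ne
      have hmain := sparse_bound r r' hr hr' g hgm (fun _ => norm_nonneg _) T E
        (fun Q hQ => hE Q (hTS Q hQ)) (hdisj.subset hTS) hfin lam hlam hsumT
      have hnorm : eLpNorm (fun x2 => b (x1, x2) - avgFst b I1 x2 - c) (ENNReal.ofReal r) volume =
          (∫⁻ x2, ENNReal.ofReal (g x2) ^ r) ^ (1 / r) := by
        rw [eLpNorm_eq_lintegral_rpow_enorm_toReal (by simpa using hr0) ENNReal.ofReal_ne_top,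
          ENNReal.toReal_ofReal hr0.le]
        simp only [hofReal]
      rw [hnorm, ENNReal.ofReal_mul (by norm_num), mul_assoc]
      calc ∑ Q ∈ T, ENNReal.ofReal (lam Q) * ∫⁻ x2 in Q.carrier, ‖Φ Q (x1, x2)‖ₑ
          ≤ ∑ Q ∈ T, ENNReal.ofReal 2 *
            (ENNReal.ofReal (lam Q) * ∫⁻ x2 in Q.carrier, ENNReal.ofReal (g x2)) := by
            refine Finset.sum_le_sum fun Q _ => ?_
            rw [mul_left_comm]
            refine mul_le_mul_right ?_ _
            have h := lintegral_sub_cubeAvg_le _ Q (hint Q) c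
            rw [cubeAvg_slice b hb I1 Q x1] at h
            simp only [hofReal]
            refine le_trans (le_of_eq (lintegral_congr fun x2 => ?_)) (h.trans (le_of_eq (by simp)))
            simp only [hΦ]
            congr 1
            ring
        _ ≤ _ := by
            rw [← Finset.mul_sum]
            exact mul_le_mul_right hmain _
    calc ∑ S ∈ T₀, ENNReal.ofReal (lam S.1 * osc11 b I1 S.1)
        = ∑ Q ∈ T, ENNReal.ofReal (lam Q) * ENNReal.ofReal (osc11 b I1 Q) := by
          rw [hT, Finset.sum_map]
          exact Finset.sum_congr rfl fun S _ => ENNReal.ofReal_mul (hlam _)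
      _ ≤ ∑ Q ∈ T, ENNReal.ofReal (lam Q) *
          ∫⁻ x1 in I1.carrier, ∫⁻ x2 in Q.carrier, ‖Φ Q (x1, x2)‖ₑ :=
          Finset.sum_le_sum fun Q _ => mul_le_mul_right (hosc Q) _
      _ = ∫⁻ x1 in I1.carrier, ∑ Q ∈ T,
          ENNReal.ofReal (lam Q) * ∫⁻ x2 in Q.carrier, ‖Φ Q (x1, x2)‖ₑ := by
          rw [lintegral_finsetSum _ fun Q _ => (hΨm Q).const_mul _]
          exact Finset.sum_congr rfl fun Q _ => (lintegral_const_mul _ (hΨm Q)).symm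
      _ ≤ ∫⁻ x1 in I1.carrier, ENNReal.ofReal (2 * C₀) * N x1 := lintegral_mono hpt
      _ = _ := lintegral_const_mul' _ _ ENNReal.ofReal_ne_top
  refine hswap.trans ?_
  rw [mul_assoc]
  refine mul_le_mul_right ?_ _
  calc ∫⁻ x1 in I1.carrier, N x1
      = volume I1.carrier * ((volume I1.carrier)⁻¹ * ∫⁻ x1 in I1.carrier, N x1) := by
        rw [← mul_assoc, ENNReal.mul_inv_cancel I1.volume_ne_zero I1.volume_ne_top, one_mul]
    _ ≤ _ := mul_le_mul_right (le_iSup (fun J1 : Cube d1 => (volume J1.carrier)⁻¹ *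
          ∫⁻ x1 in J1.carrier, ⨅ c : ℂ, eLpNorm (fun x2 => b (x1, x2) - avgFst b J1 x2 - c)
            (ENNReal.ofReal r) volume) I1) _
end
end

section
/- Let K be a standard Calderón–Zygmund kernel on ℝ^n with exponent α ∈ (0,1] and constant C_K, let a₂ ≥ 1 and c₀ > 0, and let I, Ĩ ⊂ ℝ^n be cubes of equal side length ℓ with centers c_I, c_Ĩ satisfying A·ℓ ≤ |c_I − c_Ĩ| ≤ a₂·A·ℓ and |K(c_Ĩ, c_I)| ≥ (Aℓ)^{−n}/c₀ for some A > 0. There exists A₀ ≥ 3 depending only on n, α, C_K, a₂, c₀ such that if A ≥ A₀, then for every x ∈ I: |∫_Ĩ K(y,x) dy| ≥ A^{−n}/(2c₀). -/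
/-!
The kernel `K(y, x)` barely moves as `(y, x)` ranges over `Itil × I`: two applications of the Hölder
condition (`IsCZKernel.norm_sub_le`), first from `(y, x)` to `(c_Itil, x)` and then to
`(c_Itil, c_I)`, bound the change by a constant times `A ^ (-α) * (A ℓ) ^ (-n)`. For `A` large this
is at most `(A ℓ) ^ (-n) / (2 c₀)`, half of the assumed lower bound for `|K(c_Itil, c_I)|`. Integrating
over `Itil`, whose measure is `ℓ ^ n` (`Cube.volume_real_carrier`), the constant
`K(c_Itil, c_I)` contributes at least `A ^ (-n) / c₀` and the error at most half of that.

The Bochner integral of a non-integrable function is `0`, so the integrability of `K(·, x)` on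
`Itil` is needed; it holds because the Hölder condition makes `K(·, x)` continuous away from `x`.
-/


open MeasureTheory ENNReal Set

noncomputable section

/-! ### Geometry of cubes -/

/-- A point of a cube is within `n ℓ / 2` of the center; the sharp bound is `√n ℓ / 2`, but the
dependence on `n` is immaterial here. -/
lemma Cube.dist_center_le {n : ℕ} (I : Cube n) {x : Euc n} (hx : x ∈ I.carrier) :
    dist I.center x ≤ n * (I.side / 2) := by
  have hs := I.side_pos
  rw [dist_comm, EuclideanSpace.dist_eq]
  apply Real.sqrt_le_iff.2
  refine ⟨by positivity, ?_⟩
  calc ∑ i, dist (x i) (I.center i) ^ 2 ≤ ∑ _i : Fin n, (I.side / 2) ^ 2 := by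
        refine Finset.sum_le_sum fun i _ => ?_
        rw [Real.dist_eq]
        exact pow_le_pow_left₀ (abs_nonneg _) (hx i) 2
    _ = n * (I.side / 2) ^ 2 := by simp
    _ ≤ (n * (I.side / 2)) ^ 2 := by
        rw [mul_pow]
        gcongr
        exact_mod_cast Nat.le_self_pow two_ne_zero n

lemma Cube.carrier_eq_preimage {n : ℕ} (I : Cube n) :
    I.carrier = WithLp.ofLp ⁻¹'
      Set.Icc (fun i => I.center i - I.side / 2) (fun i => I.center i + I.side / 2) := by
  ext x
  simp only [Cube.carrier, mem_ofPred_eq, mem_preimage, mem_Icc, Pi.le_def, abs_le, ← forall_and]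
  refine forall_congr' fun i => ?_
  constructor <;> rintro ⟨h, h'⟩ <;> constructor <;> linarith

lemma Cube.volume_real_carrier {n : ℕ} (I : Cube n) :
    volume.real I.carrier = I.side ^ n := by
  rw [Measure.real, Cube.carrier_eq_preimage,
    (PiLp.volume_preserving_ofLp (Fin n)).measure_preimage measurableSet_Icc.nullMeasurableSet,
    Real.volume_Icc_pi_toReal]
  · simp
  · intro i
    have := I.side_pos
    simp only
    linarith

lemma Cube.isClosed_carrier {n : ℕ} (I : Cube n) : IsClosed I.carrier := by
  rw [Cube.carrier_eq_preimage]
  exact isClosed_Icc.preimage (PiLp.continuous_ofLp 2 _)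

lemma Cube.isCompact_carrier {n : ℕ} (I : Cube n) : IsCompact I.carrier := by
  refine Metric.isCompact_of_isClosed_isBounded I.isClosed_carrier ?_
  refine (Metric.isBounded_closedBall (x := I.center) (r := n * (I.side / 2))).subset ?_
  intro x hx
  rw [Metric.mem_closedBall, dist_comm]
  exact I.dist_center_le hx

/-! ### Regularity of the kernel -/

lemma IsCZKernel.continuousAt {n : ℕ} {α CK : ℝ} {K : Euc n → Euc n → ℂ}
    (hK : IsCZKernel n α CK K) (hα : 0 < α) {y x : Euc n} (hyx : y ≠ x) :
    ContinuousAt (fun z => K z x) y := by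
  have hd : 0 < dist y x := dist_pos.2 hyx
  rw [ContinuousAt, tendsto_iff_norm_sub_tendsto_zero]
  have hlim : Filter.Tendsto (fun z => CK * dist y z ^ α / dist y x ^ ((n : ℝ) + α)) (nhds y)
      (nhds 0) := by
    have h1 : Filter.Tendsto (fun z => dist y z) (nhds y) (nhds 0) := by
      have : Continuous fun z => dist y z := by fun_prop
      simpa using this.tendsto y
    have h2 := h1.rpow_const (p := α) (Or.inr hα.le)
    rw [Real.zero_rpow hα.ne'] at h2
    simpa using (h2.const_mul CK).div_const (dist y x ^ ((n : ℝ) + α))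
  refine squeeze_zero' (Filter.Eventually.of_forall fun _ => norm_nonneg _) ?_ hlim
  filter_upwards [Metric.closedBall_mem_nhds y (half_pos hd)] with z hz
  rw [Metric.mem_closedBall, dist_comm] at hz
  have h := hK.2 y z x hyx hz
  rw [norm_sub_rev]
  linarith [norm_nonneg (K x y - K x z)]

/-- If `x`, `y` are `r`-close to points `c`, `c'` at distance at least `R ≥ 4 r`, then `K y x`
differs from `K c' c` by the Hölder error at scale `R / 2`, once for each moved variable. -/
lemma IsCZKernel.norm_sub_le {n : ℕ} {α CK : ℝ} {K : Euc n → Euc n → ℂ}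
    (hK : IsCZKernel n α CK K) (hα : 0 < α) (hCK : 0 ≤ CK) {c c' x y : Euc n} {r R : ℝ}
    (hR : 0 < R) (hrR : 4 * r ≤ R) (hx : dist c x ≤ r) (hy : dist c' y ≤ r)
    (hcc : R ≤ dist c c') :
    ‖K y x - K c' c‖ ≤ 2 * (CK * r ^ α / (R / 2) ^ ((n : ℝ) + α)) := by
  have htri : dist c c' ≤ dist c x + dist c' x := dist_triangle_right _ _ _
  have hd' : R / 2 ≤ dist c' x := by linarith
  -- moving a variable by at most `r` when the points are at least `R / 2` apart
  have key : ∀ u u' v : Euc n, dist u u' ≤ r → R / 2 ≤ dist u v →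
      ‖K u v - K u' v‖ + ‖K v u - K v u'‖ ≤ CK * r ^ α / (R / 2) ^ ((n : ℝ) + α) := by
    intro u u' v hu hv
    have hr0 : 0 ≤ r := dist_nonneg.trans hu
    have huv : u ≠ v := dist_pos.1 (by linarith)
    refine (hK.2 u u' v huv (by linarith)).trans ?_
    gcongr
  have h1 := key c' y x hy hd'
  have h2 := key c x c' hx (by linarith)
  have h3 : ‖K y x - K c' c‖ ≤ ‖K c' x - K y x‖ + ‖K c' c - K c' x‖ := by
    rw [norm_sub_rev]
    calc ‖K c' c - K y x‖ = ‖(K c' x - K y x) + (K c' c - K c' x)‖ := by congr 1; ring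
      _ ≤ _ := norm_add_le _ _
  linarith [norm_nonneg (K x c' - K x y), norm_nonneg (K c c' - K x c')]

/-- The Hölder error with `r = n ℓ / 2` and `R = A ℓ`, for `A` so large that
`4 c₀ C_K n ^ α 2 ^ n ≤ A ^ α`. -/
lemma holder_error_le {n : ℕ} {α CK c₀ A s : ℝ} (hc₀ : 0 < c₀) (hA : 0 < A) (hs : 0 < s)
    (hM : 4 * c₀ * CK * (n : ℝ) ^ α * 2 ^ n ≤ A ^ α) :
    2 * (CK * (n * (s / 2)) ^ α / (A * s / 2) ^ ((n : ℝ) + α)) ≤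
      ((A * s) ^ n)⁻¹ / (2 * c₀) := by
  have hs2 : 0 < s / 2 := half_pos hs
  have e1 : ((n : ℝ) * (s / 2)) ^ α = (n : ℝ) ^ α * (s / 2) ^ α :=
    Real.mul_rpow (Nat.cast_nonneg n) hs2.le
  have e2 : (A * s / 2) ^ ((n : ℝ) + α) = (A * s) ^ n / 2 ^ n * (A ^ α * (s / 2) ^ α) := by
    rw [Real.rpow_add (by positivity), Real.rpow_natCast, div_pow, mul_div_assoc A s 2,
      Real.mul_rpow hA.le hs2.le]
  rw [e1, e2]
  have hp : 0 < (s / 2) ^ α := Real.rpow_pos_of_pos hs2 α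
  have hq : 0 < A ^ α := Real.rpow_pos_of_pos hA α
  have hr : 0 < (A * s) ^ n := by positivity
  have e3 : 2 * (CK * ((n : ℝ) ^ α * (s / 2) ^ α) /
      ((A * s) ^ n / 2 ^ n * (A ^ α * (s / 2) ^ α))) =
      (4 * c₀ * CK * (n : ℝ) ^ α * 2 ^ n) / A ^ α * (((A * s) ^ n)⁻¹ / (2 * c₀)) := by
    field_simp
    ring
  rw [e3]
  exact mul_le_of_le_one_left (by positivity) ((div_le_one hq).2 hM)

/-! ### The lower bound -/

theorem statement9 (n : ℕ) (hn : 1 ≤ n) (α : ℝ) (hα : 0 < α) (hα' : α ≤ 1)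
    (CK : ℝ) (hCK : 0 ≤ CK) (a₂ : ℝ) (ha₂ : 1 ≤ a₂) (c₀ : ℝ) (hc₀ : 0 < c₀) :
    ∃ A₀ : ℝ, 3 ≤ A₀ ∧
      ∀ K : Euc n → Euc n → ℂ, IsCZKernel n α CK K →
      ∀ (I Itil : Cube n) (A : ℝ), Itil.side = I.side → A₀ ≤ A →
        A * I.side ≤ dist I.center Itil.center →
        dist I.center Itil.center ≤ a₂ * A * I.side →
        (A * I.side) ^ (-(n : ℝ)) / c₀ ≤ ‖K Itil.center I.center‖ →
        ∀ x ∈ I.carrier,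
          A ^ (-(n : ℝ)) / (2 * c₀) ≤ ‖∫ y in Itil.carrier, K y x‖ := by
  set M : ℝ := 4 * c₀ * CK * (n : ℝ) ^ α * 2 ^ n with hM_def
  have hM : 0 ≤ M := by positivity
  -- `A ≥ 2 n` separates the cubes; `A ≥ M ^ (1 / α)` makes the Hölder error small
  refine ⟨max 3 (max (2 * n) (M ^ α⁻¹)), le_max_left _ _, ?_⟩
  intro K hK I Itil A hside hA hlow _ hker x hx
  obtain ⟨hA3, hA2⟩ := max_le_iff.1 hA
  obtain ⟨hAn, hAM⟩ := max_le_iff.1 hA2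
  have hA0 : 0 < A := by linarith
  have hs : 0 < I.side := I.side_pos
  have hMA : M ≤ A ^ α := by
    calc M = (M ^ α⁻¹) ^ α := (Real.rpow_inv_rpow hM hα.ne').symm
      _ ≤ A ^ α := Real.rpow_le_rpow (by positivity) hAM hα.le
  have hR : 0 < A * I.side := by positivity
  have hrR : 4 * (n * (I.side / 2)) ≤ A * I.side := by
    have := mul_le_mul_of_nonneg_right hAn hs.le
    linarith
  have hxd := I.dist_center_le hx
  have hyd : ∀ y ∈ Itil.carrier, dist Itil.center y ≤ n * (I.side / 2) := by
    intro y hy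
    rw [← hside]
    exact Itil.dist_center_le hy
  have herr : ∀ y ∈ Itil.carrier,
      ‖K y x - K Itil.center I.center‖ ≤ ((A * I.side) ^ n)⁻¹ / (2 * c₀) := fun y hy =>
    (hK.norm_sub_le hα hCK hR hrR hxd (hyd y hy) hlow).trans
      (holder_error_le hc₀ hA0 hs hMA)
  have hne : ∀ y ∈ Itil.carrier, y ≠ x := by
    rintro y hy rfl
    have := dist_triangle_right I.center Itil.center y
    linarith [hyd y hy]
  have hint : IntegrableOn (fun y => K y x) Itil.carrier :=
    ContinuousOn.integrableOn_compact Itil.isCompact_carrier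
      fun y hy => (hK.continuousAt hα (hne y hy)).continuousWithinAt
  have hfin : volume Itil.carrier < ∞ := Itil.isCompact_carrier.measure_lt_top
  have hvol : volume.real Itil.carrier = I.side ^ n := by
    rw [Itil.volume_real_carrier, hside]
  have hdiff : (∫ y in Itil.carrier, K y x) - (I.side ^ n : ℝ) • K Itil.center I.center =
      ∫ y in Itil.carrier, (K y x - K Itil.center I.center) := by
    rw [integral_sub hint (integrableOn_const hfin.ne), setIntegral_const, hvol]
  have hbound := norm_setIntegral_le_of_norm_le_const hfin herr
  rw [← hdiff, hvol] at hbound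
  have hmain : I.side ^ n * (((A * I.side) ^ n)⁻¹ / c₀) ≤
      ‖(I.side ^ n : ℝ) • K Itil.center I.center‖ := by
    rw [norm_smul, Real.norm_of_nonneg (by positivity)]
    rw [Real.rpow_neg hR.le, Real.rpow_natCast] at hker
    gcongr
  have htri : ‖(I.side ^ n : ℝ) • K Itil.center I.center‖ ≤ ‖∫ y in Itil.carrier, K y x‖ +
      ‖(∫ y in Itil.carrier, K y x) - (I.side ^ n : ℝ) • K Itil.center I.center‖ := by
    exact norm_le_norm_add_norm_sub _ _
  have e1 : I.side ^ n * (((A * I.side) ^ n)⁻¹ / c₀) = 2 * ((A ^ n)⁻¹ / (2 * c₀)) := by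
    rw [mul_pow]
    field_simp
  have e2 : ((A * I.side) ^ n)⁻¹ / (2 * c₀) * I.side ^ n = (A ^ n)⁻¹ / (2 * c₀) := by
    rw [mul_pow]
    field_simp
  rw [Real.rpow_neg hA0.le, Real.rpow_natCast]
  rw [e1] at hmain
  rw [e2] at hbound
  linarith
end
end
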